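/- Let u be an information structure on K × (C×C₁×C₂) × D, and define v = marg_{K×(C×C₁)×D}u, u' = marg_{K×(C×C₂)×D}u, v' = marg_{K×C×D}u. If under u the signal c₁ is conditionally independent from (c, c₂, d) given the state k, then d(u', v') ≥ d(u, v): the marginal value of the extra signal c₂ is smaller in the presence of c₁ (informational substitutes). -/

import Mathlib

open scoped BigOperators ENNReal

namespace ValueDistance

/-- An information structure: a probability distribution on `K × ℕ × ℕ`
(state, signal of player 1, signal of player 2). -/
abbrev InfoStruct (K : Type) := PMF (K × ℕ × ℕ)

/-- A behavior strategy / garbling : a map `ℕ → Δ(ℕ)`. -/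
abbrev Garbling : Type := ℕ → PMF ℕ

variable {K : Type}

/-- `g` is a payoff function with action bound `L` : values in `[-1,1]`,
`g k i j = -1` when `i ≥ L`, and `g k i j = 1` when `i < L` and `j ≥ L`. -/
def IsPayoffL (L : ℕ) (g : K → ℕ → ℕ → ℝ) : Prop :=
  (∀ k i j, g k i j ∈ Set.Icc (-1 : ℝ) 1) ∧
  (∀ k i j, L ≤ i → g k i j = -1) ∧
  (∀ k i j, i < L → L ≤ j → g k i j = 1)

/-- `g` belongs to the set `𝒢` of payoff functions. -/
def IsPayoff (g : K → ℕ → ℕ → ℝ) : Prop := ∃ L, IsPayoffL L g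

/-- `g` belongs to the set `𝒢₁` of single-agent (player 1) problems. -/
def IsPayoff1 (g : K → ℕ → ℕ → ℝ) : Prop :=
  IsPayoff g ∧ ∀ k i j j', g k i j = g k i j'

/-- Expected payoff in the Bayesian game `Γ(u,g)` when player 1 uses the behavior
strategy `σ` and player 2 uses `τ`. -/
noncomputable def payoff (u : InfoStruct K) (g : K → ℕ → ℕ → ℝ)
    (σ τ : Garbling) : ℝ :=
  ∑' (x : K × ℕ × ℕ) (i : ℕ) (j : ℕ),
    (u x).toReal * (σ x.2.1 i).toReal * (τ x.2.2 j).toReal * g x.1 i j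

/-- The value `val(u,g)` of the zero-sum Bayesian game `Γ(u,g)`
(the common value of `sup inf` and `inf sup` of the expected payoff;
we take `sup inf` as the definition). -/
noncomputable def val (u : InfoStruct K) (g : K → ℕ → ℕ → ℝ) : ℝ :=
  ⨆ σ : Garbling, ⨅ τ : Garbling, payoff u g σ τ

/-- Total variation distance `‖u − v‖`. -/
noncomputable def tv {α : Type} (u v : PMF α) : ℝ :=
  ∑' x : α, |(u x).toReal - (v x).toReal|

/-- `q.u` : player 1's signal garbled through `q`. -/
noncomputable def garbleLeft (q : Garbling) (u : InfoStruct K) : InfoStruct K :=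
  u.bind (fun x => (q x.2.1).map (fun c => (x.1, c, x.2.2)))

/-- `u.q` : player 2's signal garbled through `q`. -/
noncomputable def garbleRight (u : InfoStruct K) (q : Garbling) : InfoStruct K :=
  u.bind (fun x => (q x.2.2).map (fun d => (x.1, x.2.1, d)))

/-- The value-based distance `d(u,v) = sup_{g ∈ 𝒢} |val(u,g) − val(v,g)|`. -/
noncomputable def dVal (u v : InfoStruct K) : ℝ :=
  ⨆ g : {g : K → ℕ → ℕ → ℝ // IsPayoff g}, |val u g.1 - val v g.1|

/-- The single-agent distance `d₁(u,v) = sup_{g ∈ 𝒢₁} |val(u,g) − val(v,g)|`. -/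
noncomputable def d1 (u v : InfoStruct K) : ℝ :=
  ⨆ g : {g : K → ℕ → ℕ → ℝ // IsPayoff1 g}, |val u g.1 - val v g.1|

/-- Marginal of an information structure on `K × ℕ` (state, player 1's signal). -/
noncomputable def marg1 (u : InfoStruct K) : PMF (K × ℕ) :=
  u.map (fun x => (x.1, x.2.1))

/-- Garbling of a single-agent information structure:
`(q.w)(k,c) = Σ_s w(k,s)·q(s)({c})`. -/
noncomputable def garble1 (q : Garbling) (w : PMF (K × ℕ)) : PMF (K × ℕ) :=
  w.bind (fun x => (q x.2).map (fun c => (x.1, c)))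

/-- Marginal of an information structure on the states. -/
noncomputable def margK (u : InfoStruct K) : PMF K := u.map Prod.fst

/-- Marginal of an information structure on `K × ℕ` (state, player 2's signal). -/
noncomputable def margKD (u : InfoStruct K) : PMF (K × ℕ) :=
  u.map (fun x => (x.1, x.2.2))

/-- `σ.q` : on signal `c`, draw `c'` according to `q(c)` and play `σ(c')`. -/
noncomputable def compGarble (σ q : Garbling) : Garbling :=
  fun c => (q c).bind σ

/-- `u ∈ 𝒰(L)` : both players' signals are `< L` with probability 1. -/
def InU (L : ℕ) (u : InfoStruct K) : Prop :=
  ∀ x : K × ℕ × ℕ, u x ≠ 0 → x.2.1 < L ∧ x.2.2 < L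

/-- `q ∈ 𝒬(L)` : garbling with values supported on `{0,…,L−1}`. -/
def GarblingIn (L : ℕ) (q : Garbling) : Prop :=
  ∀ n m, q n m ≠ 0 → m < L

/-- The two players' signals are conditionally independent given the state:
`u(k)·u(k,c,d) = u(k,c)·u(k,d)` for all `k, c, d`
(equivalently `u(c,d|k) = u(c|k)·u(d|k)` whenever `u(k) > 0`). -/
def CondIndep (u : InfoStruct K) : Prop :=
  ∀ (k : K) (c d : ℕ),
    (∑' y : ℕ × ℕ, u (k, y)) * u (k, c, d)
      = (∑' d' : ℕ, u (k, c, d')) * (∑' c' : ℕ, u (k, c', d))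

end ValueDistance

namespace ValueDistance

/-- Expectation of a real function under a PMF. -/
noncomputable def EE {α : Type} (p : PMF α) (f : α → ℝ) : ℝ := ∑' a, (p a).toReal * f a

def Bd {α : Type} (f : α → ℝ) : Prop := ∀ a, |f a| ≤ 3

lemma pmf_summable {α : Type} (p : PMF α) : Summable (fun a => (p a).toReal) :=
  ENNReal.summable_toReal (by rw [p.tsum_coe]; simp)

lemma pmf_tsum {α : Type} (p : PMF α) : ∑' a, (p a).toReal = 1 := by
  rw [← ENNReal.tsum_toReal_eq (fun a => p.apply_ne_top a), p.tsum_coe]; simp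

lemma EE_summable {α : Type} (p : PMF α) {f : α → ℝ} (hf : Bd f) :
    Summable (fun a => (p a).toReal * f a) := by
  refine Summable.of_norm_bounded ((pmf_summable p).mul_right 3) (fun a => ?_)
  rw [norm_mul, Real.norm_eq_abs, Real.norm_eq_abs, abs_of_nonneg ENNReal.toReal_nonneg]
  exact mul_le_mul_of_nonneg_left (hf a) ENNReal.toReal_nonneg

lemma EE_mono {α : Type} (p : PMF α) {f g : α → ℝ} (hf : Bd f) (hg : Bd g)
    (h : ∀ a, f a ≤ g a) : EE p f ≤ EE p g :=
  (EE_summable p hf).tsum_le_tsum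
    (fun a => mul_le_mul_of_nonneg_left (h a) ENNReal.toReal_nonneg) (EE_summable p hg)

lemma EE_const {α : Type} (p : PMF α) (c : ℝ) : EE p (fun _ => c) = c := by
  unfold EE; rw [tsum_mul_right, pmf_tsum, one_mul]

lemma EE_sub {α : Type} (p : PMF α) {f g : α → ℝ} (hf : Bd f) (hg : Bd g) (c : ℝ) :
    EE p (fun a => f a - c * g a) = EE p f - c * EE p g := by
  unfold EE
  rw [← tsum_mul_left, ← (EE_summable p hf).tsum_sub ((EE_summable p hg).mul_left c)]
  congr 1; funext a; ring

lemma EE_Icc {α : Type} (p : PMF α) {f : α → ℝ} (hf : ∀ a, f a ∈ Set.Icc (-1:ℝ) 1) :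
    EE p f ∈ Set.Icc (-1:ℝ) 1 := by
  have hb : Bd f := fun a => abs_le.2 ⟨by linarith [(hf a).1], by linarith [(hf a).2]⟩
  constructor
  · rw [← EE_const p (-1)]
    exact EE_mono p (fun a => by norm_num) hb (fun a => (hf a).1)
  · rw [← EE_const p 1]
    exact EE_mono p hb (fun a => by norm_num) (fun a => (hf a).2)

lemma Bd_of {α : Type} {f : α → ℝ} (hf : ∀ a, f a ∈ Set.Icc (-1:ℝ) 1) : Bd f :=
  fun a => abs_le.2 ⟨by linarith [(hf a).1], by linarith [(hf a).2]⟩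

lemma EE_double_summable {α β : Type} (p : PMF α) (q : α → PMF β) {f : α → β → ℝ}
    (hf : ∀ a, Bd (f a)) :
    Summable (fun x : α × β => (p x.1).toReal * ((q x.1 x.2).toReal * f x.1 x.2)) := by
  have h1 : Summable (fun x : α × β => (p x.1).toReal * (q x.1 x.2).toReal) := by
    have hnn : (0 : α × β → ℝ) ≤ fun x : α × β => (p x.1).toReal * (q x.1 x.2).toReal := by
      intro x
      exact mul_nonneg (ENNReal.toReal_nonneg (a := p x.1))
        (ENNReal.toReal_nonneg (a := q x.1 x.2))
    refine (summable_prod_of_nonneg hnn).2 ⟨?_, ?_⟩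
    · intro a
      have h := (pmf_summable (q a)).mul_left (p a).toReal
      exact h
    simp only [tsum_mul_left, pmf_tsum, mul_one]
    exact pmf_summable p
  refine Summable.of_norm_bounded (h1.mul_right 3) (fun x => ?_)
  rw [← mul_assoc, norm_mul, Real.norm_eq_abs, Real.norm_eq_abs,
    abs_of_nonneg (mul_nonneg ENNReal.toReal_nonneg ENNReal.toReal_nonneg)]
  exact mul_le_mul_of_nonneg_left (hf _ _) (mul_nonneg ENNReal.toReal_nonneg ENNReal.toReal_nonneg)

lemma EE_swap {α β : Type} (p : PMF α) (q : PMF β) {f : α → β → ℝ} (hf : ∀ a, Bd (f a)) :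
    EE p (fun a => EE q (fun b => f a b)) = EE q (fun b => EE p (fun a => f a b)) := by
  unfold EE
  simp only [← tsum_mul_left]
  have h := Summable.tsum_comm (f := fun a b => (p a).toReal * ((q b).toReal * f a b))
    (EE_double_summable p (fun _ => q) hf)
  rw [h.symm]
  congr 1; funext b; congr 1; funext a; ring

lemma EE_bind {α β : Type} (p : PMF α) (q : α → PMF β) {f : β → ℝ} (hf : Bd f) :
    EE (p.bind q) f = EE p (fun a => EE (q a) f) := by
  unfold EE
  simp only [← tsum_mul_left]
  have h := Summable.tsum_comm (f := fun a b => (p a).toReal * ((q a b).toReal * f b))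
    (EE_double_summable p q (fun _ => hf))
  rw [← h]
  congr 1; funext b
  rw [PMF.bind_apply, ENNReal.tsum_toReal_eq, ← tsum_mul_right]
  · congr 1; funext a; rw [ENNReal.toReal_mul]; ring
  · intro a; exact ENNReal.mul_ne_top (p.apply_ne_top a) ((q a).apply_ne_top b)

lemma EE_pure {α : Type} (a : α) (f : α → ℝ) : EE (PMF.pure a) f = f a := by
  unfold EE
  rw [tsum_eq_single a]
  · simp
  · intro b hb; simp [hb]

lemma EE_map {α β : Type} (p : PMF α) (h : α → β) {f : β → ℝ} (hf : Bd f) :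
    EE (p.map h) f = EE p (fun a => f (h a)) := by
  rw [← PMF.bind_pure_comp, EE_bind _ _ hf]
  simp [EE_pure]

variable {K : Type}

lemma payoff_eq (u : InfoStruct K) (g : K → ℕ → ℕ → ℝ) (σ τ : Garbling) :
    payoff u g σ τ = EE u (fun x => EE (σ x.2.1) (fun i => EE (τ x.2.2) (fun j => g x.1 i j))) := by
  unfold payoff EE
  simp only [← tsum_mul_left, mul_assoc]

lemma payoff_Icc (u : InfoStruct K) {g : K → ℕ → ℕ → ℝ}
    (hg : ∀ k i j, g k i j ∈ Set.Icc (-1:ℝ) 1) (σ τ : Garbling) :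
    payoff u g σ τ ∈ Set.Icc (-1:ℝ) 1 := by
  rw [payoff_eq]
  exact EE_Icc _ fun _ => EE_Icc _ fun _ => EE_Icc _ fun _ => hg _ _ _

instance : Nonempty Garbling := ⟨fun _ => PMF.pure 0⟩

lemma val_le {A B : InfoStruct K} {g₁ g₂ : K → ℕ → ℕ → ℝ}
    (h₁ : ∀ k i j, g₁ k i j ∈ Set.Icc (-1:ℝ) 1) (h₂ : ∀ k i j, g₂ k i j ∈ Set.Icc (-1:ℝ) 1)
    (e : ℝ) (h : ∀ σ : Garbling, ∃ σ' : Garbling, ∀ τ : Garbling,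
      payoff A g₁ σ τ ≤ payoff B g₂ σ' τ + e) :
    val A g₁ ≤ val B g₂ + e := by
  unfold val
  refine ciSup_le fun σ => ?_
  obtain ⟨σ', hσ'⟩ := h σ
  have h3 : (⨅ τ : Garbling, payoff A g₁ σ τ) - e ≤ ⨅ τ : Garbling, payoff B g₂ σ' τ := by
    refine le_ciInf fun τ => ?_
    have : (⨅ τ : Garbling, payoff A g₁ σ τ) ≤ payoff A g₁ σ τ :=
      ciInf_le ⟨-1, by rintro _ ⟨τ, rfl⟩; exact (payoff_Icc A h₁ σ τ).1⟩ τ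
    linarith [hσ' τ]
  have h4 : (⨅ τ : Garbling, payoff B g₂ σ' τ) ≤ ⨆ σ : Garbling, ⨅ τ : Garbling, payoff B g₂ σ τ := by
    refine le_ciSup (f := fun σ : Garbling => ⨅ τ : Garbling, payoff B g₂ σ τ) ⟨1, ?_⟩ σ'
    rintro _ ⟨σ, rfl⟩
    exact (ciInf_le ⟨-1, by rintro _ ⟨τ, rfl⟩; exact (payoff_Icc B h₂ σ τ).1⟩
      (Classical.arbitrary _)).trans (payoff_Icc B h₂ σ _).2
  linarith

lemma val_Icc (u : InfoStruct K) {g : K → ℕ → ℕ → ℝ}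
    (hg : ∀ k i j, g k i j ∈ Set.Icc (-1:ℝ) 1) : val u g ∈ Set.Icc (-1:ℝ) 1 := by
  have hb : ∀ σ : Garbling, (⨅ τ : Garbling, payoff u g σ τ) ∈ Set.Icc (-1:ℝ) 1 := fun σ =>
    ⟨le_ciInf fun τ => (payoff_Icc u hg σ τ).1,
     (ciInf_le ⟨-1, by rintro _ ⟨τ, rfl⟩; exact (payoff_Icc u hg σ τ).1⟩
      (Classical.arbitrary _)).trans (payoff_Icc u hg σ _).2⟩
  refine ⟨?_, ciSup_le fun σ => (hb σ).2⟩
  refine (hb (Classical.arbitrary _)).1.trans ?_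
  exact le_ciSup (f := fun σ : Garbling => ⨅ τ : Garbling, payoff u g σ τ)
    ⟨1, by rintro _ ⟨σ, rfl⟩; exact (hb σ).2⟩ _

lemma le_dVal (u v : InfoStruct K) {g : K → ℕ → ℕ → ℝ} (hg : IsPayoff g) :
    |val u g - val v g| ≤ dVal u v := by
  unfold dVal
  refine le_ciSup (f := fun g : {g : K → ℕ → ℕ → ℝ // IsPayoff g} => |val u g.1 - val v g.1|)
    ⟨2, ?_⟩ ⟨g, hg⟩
  rintro _ ⟨⟨g, L, hg⟩, rfl⟩
  have h1 := val_Icc u hg.1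
  have h2 := val_Icc v hg.1
  exact abs_le.2 ⟨by linarith [h1.1, h2.2], by linarith [h1.2, h2.1]⟩

/-- A joint law with given first `N` marginals. -/
lemma exists_joint (p : ℕ → PMF ℕ) (N : ℕ) :
    ∃ Q : PMF (ℕ → ℕ), ∀ n < N, Q.map (fun f => f n) = p n := by
  induction N with
  | zero => exact ⟨PMF.pure (fun _ => 0), fun n hn => absurd hn (Nat.not_lt_zero n)⟩
  | succ N ih =>
    obtain ⟨Q, hQ⟩ := ih
    refine ⟨Q.bind (fun f => (p N).map (fun a => Function.update f N a)), fun n hn => ?_⟩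
    rw [PMF.map_bind]
    simp only [PMF.map_comp]
    by_cases h : n = N
    · subst h
      have : ∀ f : ℕ → ℕ, ((fun f : ℕ → ℕ => f n) ∘ fun a => Function.update f n a) = id := by
        intro f; funext a; simp
      simp only [this, PMF.map_id, PMF.bind_const]
    · have : ∀ f : ℕ → ℕ, ((fun f : ℕ → ℕ => f n) ∘ fun a => Function.update f N a)
          = Function.const _ (f n) := by
        intro f; funext a; simp [Function.update_of_ne h]
      simp only [this, PMF.map_const]
      rw [← hQ n (by omega), ← PMF.bind_pure_comp]; rfl

lemma exists_dec (L N : ℕ) (hL : 1 ≤ L) (hN : 1 ≤ N) :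
    ∃ (L' : ℕ) (dec : ℕ → ℕ → ℕ), L ≤ L' ∧ (∀ i n, L' ≤ i → dec i n = L) ∧
      (∀ i n, i < L' → dec i n < L) ∧
      (∀ f : ℕ → ℕ, (∀ n, f n < L) → ∃ i, i < L' ∧ ∀ n < N, dec i n = f n) := by
  refine ⟨L ^ N, fun i n => if h : i < L ^ N then
    (if hn : n < N then (finFunctionFinEquiv.symm (⟨i, h⟩ : Fin (L ^ N)) ⟨n, hn⟩ : Fin L).1 else 0)
    else L, ?_, ?_, ?_, ?_⟩
  · exact Nat.le_self_pow (by omega) L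
  · intro i n h; simp [not_lt.2 h]
  · intro i n h
    simp only [h, dif_pos]
    split_ifs
    · exact Fin.is_lt _
    · omega
  · intro f hf
    refine ⟨(finFunctionFinEquiv (fun n : Fin N => (⟨f n, hf n⟩ : Fin L))).1, Fin.is_lt _, ?_⟩
    intro n hn
    dsimp only
    rw [dif_pos (Fin.is_lt _), dif_pos hn, Fin.eta, Equiv.symm_apply_apply]

/-- Player 1's signal augmented by an independent draw given the state. -/
noncomputable def aug (m : InfoStruct K) (P : K → PMF ℕ) (enc : ℕ → ℕ → ℕ) : InfoStruct K :=
  m.bind (fun x => (P x.1).map (fun c => (x.1, enc x.2.1 c, x.2.2)))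

lemma payoff_aug (m : InfoStruct K) (P : K → PMF ℕ) (enc : ℕ → ℕ → ℕ) {g : K → ℕ → ℕ → ℝ}
    (hg : ∀ k i j, g k i j ∈ Set.Icc (-1:ℝ) 1) (σ τ : Garbling) :
    payoff (aug m P enc) g σ τ = EE m (fun x => EE (P x.1) (fun c =>
      EE (σ (enc x.2.1 c)) (fun i => EE (τ x.2.2) (fun j => g x.1 i j)))) := by
  have hb : Bd (fun x : K × ℕ × ℕ => EE (σ x.2.1) (fun i => EE (τ x.2.2) (fun j => g x.1 i j))) :=
    Bd_of fun _ => EE_Icc _ fun _ => EE_Icc _ fun _ => hg _ _ _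
  rw [payoff_eq, aug, EE_bind _ _ hb]
  congr 1; funext x
  rw [EE_map _ _ hb]

/-- The payoff function of the auxiliary game. -/
noncomputable def gaux (P : K → PMF ℕ) (g : K → ℕ → ℕ → ℝ) (dec : ℕ → ℕ → ℕ) :
    K → ℕ → ℕ → ℝ := fun k i j => EE (P k) (fun c => g k (dec i c) j)

lemma payoff_gaux (m : InfoStruct K) (P : K → PMF ℕ) (dec : ℕ → ℕ → ℕ) {g : K → ℕ → ℕ → ℝ}
    (hg : ∀ k i j, g k i j ∈ Set.Icc (-1:ℝ) 1) (σ τ : Garbling) :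
    payoff m (gaux P g dec) σ τ = EE m (fun x => EE (P x.1) (fun c =>
      EE (σ x.2.1) (fun i => EE (τ x.2.2) (fun j => g x.1 (dec i c) j)))) := by
  rw [payoff_eq]
  congr 1; funext x
  rw [EE_swap (P x.1) (σ x.2.1) (fun c => Bd_of fun i => EE_Icc _ fun _ => hg _ _ _)]
  congr 1; funext i
  unfold gaux
  rw [EE_swap _ _ (fun _ => Bd_of fun _ => hg _ _ _)]

lemma gaux_Icc (P : K → PMF ℕ) (dec : ℕ → ℕ → ℕ) {g : K → ℕ → ℕ → ℝ}
    (hg : ∀ k i j, g k i j ∈ Set.Icc (-1:ℝ) 1) :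
    ∀ k i j, gaux P g dec k i j ∈ Set.Icc (-1:ℝ) 1 :=
  fun _ _ _ => EE_Icc _ fun _ => hg _ _ _

lemma val_gaux_le (m : InfoStruct K) (P : K → PMF ℕ) (enc dec : ℕ → ℕ → ℕ) (p₁ p₂ : ℕ → ℕ)
    (he₁ : ∀ e c, p₁ (enc e c) = e) (he₂ : ∀ e c, p₂ (enc e c) = c) {g : K → ℕ → ℕ → ℝ}
    (hg : ∀ k i j, g k i j ∈ Set.Icc (-1:ℝ) 1) :
    val m (gaux P g dec) ≤ val (aug m P enc) g := by
  have := val_le (A := m) (B := aug m P enc) (gaux_Icc P dec hg) hg 0 (fun σ' =>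
    ⟨fun s => (σ' (p₁ s)).map (fun i => dec i (p₂ s)), fun τ => ?_⟩)
  · simpa using this
  · rw [payoff_gaux m P dec hg, payoff_aug m P enc hg, add_zero]
    apply le_of_eq
    congr 1; funext x; congr 1; funext c
    rw [EE_map _ _ (Bd_of fun _ => EE_Icc _ fun _ => hg _ _ _), he₁, he₂]

lemma val_aug_le (m : InfoStruct K) (P : K → PMF ℕ) (enc : ℕ → ℕ → ℕ)
    {g : K → ℕ → ℕ → ℝ} {L N L' : ℕ} {dec : ℕ → ℕ → ℕ} (hL : 1 ≤ L) (hg : IsPayoffL L g)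
    (hdec : ∀ f : ℕ → ℕ, (∀ n, f n < L) → ∃ i, i < L' ∧ ∀ n < N, dec i n = f n)
    {ε : ℝ} (hN : ∀ k, EE (P k) (fun c => if N ≤ c then 1 else 0) ≤ ε) :
    val (aug m P enc) g ≤ val m (gaux P g dec) + 2 * ε := by
  have hg1 := hg.1
  refine val_le hg1 (gaux_Icc P dec hg1) _ (fun σ => ?_)
  choose Q hQ using fun e => exists_joint (fun n => σ (enc e n)) N
  have hcl : ∀ f : ℕ → ℕ, ∃ i, ∀ n < N, dec i n = if f n < L then f n else 0 := by
    intro f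
    obtain ⟨i, -, hi⟩ := hdec (fun n => if f n < L then f n else 0)
      (fun n => by split_ifs <;> omega)
    exact ⟨i, hi⟩
  choose cod hcod using hcl
  refine ⟨fun e => (Q e).map cod, fun τ => ?_⟩
  rw [payoff_gaux m P dec hg1, payoff_aug m P enc hg1]
  have hind : Bd (fun c : ℕ => if N ≤ c then (1:ℝ) else 0) := by
    intro c; dsimp only; split_ifs <;> norm_num
  have key : ∀ x : K × ℕ × ℕ, EE (P x.1) (fun c =>
      EE (σ (enc x.2.1 c)) (fun i => EE (τ x.2.2) (fun j => g x.1 i j))) - 2 * ε ≤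
      EE (P x.1) (fun c =>
      EE ((Q x.2.1).map cod) (fun i => EE (τ x.2.2) (fun j => g x.1 (dec i c) j))) := by
    intro x
    have hA : ∀ c, EE (σ (enc x.2.1 c)) (fun i => EE (τ x.2.2) (fun j => g x.1 i j))
      ∈ Set.Icc (-1:ℝ) 1 := fun c => EE_Icc _ fun _ => EE_Icc _ fun _ => hg1 _ _ _
    have hB : ∀ c, EE ((Q x.2.1).map cod) (fun i => EE (τ x.2.2) (fun j => g x.1 (dec i c) j))
      ∈ Set.Icc (-1:ℝ) 1 := fun c => EE_Icc _ fun _ => EE_Icc _ fun _ => hg1 _ _ _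
    have h1 := EE_sub (P x.1) (Bd_of hA) hind 2
    have h2 : EE (P x.1) (fun c =>
        EE (σ (enc x.2.1 c)) (fun i => EE (τ x.2.2) (fun j => g x.1 i j))
          - 2 * (if N ≤ c then (1:ℝ) else 0)) ≤ EE (P x.1) (fun c =>
      EE ((Q x.2.1).map cod) (fun i => EE (τ x.2.2) (fun j => g x.1 (dec i c) j))) := by
      refine EE_mono _ ?_ (Bd_of hB) ?_
      · intro c
        dsimp only
        have := hA c
        split_ifs <;> exact abs_le.2 ⟨by linarith [this.1], by linarith [this.2]⟩
      · intro c
        by_cases hc : N ≤ c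
        · simp only [hc, if_true]
          linarith [(hA c).2, (hB c).1]
        · simp only [hc, if_false, mul_zero, sub_zero]
          rw [EE_map _ _ (Bd_of fun _ => EE_Icc _ fun _ => hg1 _ _ _),
            ← hQ x.2.1 c (not_le.1 hc),
            EE_map _ _ (Bd_of fun _ => EE_Icc _ fun _ => hg1 _ _ _)]
          refine EE_mono _ (Bd_of fun _ => EE_Icc _ fun _ => hg1 _ _ _)
            (Bd_of fun _ => EE_Icc _ fun _ => hg1 _ _ _) (fun f => ?_)
          rw [hcod f c (not_le.1 hc)]
          refine EE_mono _ (Bd_of fun _ => hg1 _ _ _) (Bd_of fun _ => hg1 _ _ _) (fun j => ?_)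
          split_ifs with h
          · exact le_rfl
          · rw [hg.2.1 x.1 (f c) j (not_lt.1 h)]; exact (hg1 _ _ _).1
    linarith [hN x.1]
  rw [← sub_le_iff_le_add]
  have hA : ∀ x : K × ℕ × ℕ, EE (P x.1) (fun c =>
      EE (σ (enc x.2.1 c)) (fun i => EE (τ x.2.2) (fun j => g x.1 i j))) ∈ Set.Icc (-1:ℝ) 1 :=
    fun x => EE_Icc _ fun c => EE_Icc _ fun _ => EE_Icc _ fun _ => hg1 _ _ _
  have hB : ∀ x : K × ℕ × ℕ, EE (P x.1) (fun c =>
      EE ((Q x.2.1).map cod) (fun i => EE (τ x.2.2) (fun j => g x.1 (dec i c) j)))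
      ∈ Set.Icc (-1:ℝ) 1 :=
    fun x => EE_Icc _ fun c => EE_Icc _ fun _ => EE_Icc _ fun _ => hg1 _ _ _
  have h3 := EE_sub m (Bd_of hA) (g := fun _ => (1:ℝ)) (fun _ => by norm_num) (2 * ε)
  rw [EE_const, mul_one] at h3
  rw [← h3]
  by_cases hε : 2 * ε ≤ 2
  · have hε0 : 0 ≤ ε := by
      have x := m.support_nonempty.some
      refine le_trans ?_ (hN x.1)
      refine (EE_const (P x.1) 0).ge.trans ?_
      refine EE_mono _ (fun _ => by norm_num) hind (fun c => ?_)
      split_ifs <;> norm_num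
    refine EE_mono _ ?_ (Bd_of hB) (fun x => by simpa using key x)
    intro x
    exact abs_le.2 ⟨by linarith [(hA x).1], by linarith [(hA x).2]⟩
  · rw [h3]
    linarith [(EE_Icc m hA).2, (EE_Icc m hB).1]

lemma exists_tail (p : PMF ℕ) {ε : ℝ} (hε : 0 < ε) :
    ∃ N₀, ∀ N ≥ N₀, EE p (fun c => if N ≤ c then 1 else 0) ≤ ε := by
  have h := tendsto_sum_nat_add (fun a => (p a).toReal)
  obtain ⟨N₀, h0⟩ := Filter.eventually_atTop.1 (h.eventually (gt_mem_nhds hε))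
  refine ⟨N₀, fun N hN => ?_⟩
  have hs : Bd (fun c : ℕ => if N ≤ c then (1:ℝ) else 0) := by
    intro c; dsimp only; split_ifs <;> norm_num
  have h2 := (EE_summable p hs).sum_add_tsum_nat_add N
  unfold EE
  rw [← h2, Finset.sum_eq_zero]
  · simpa using (h0 N hN).le
  · intro i hi
    simp [Finset.mem_range.1 hi]

lemma val_neg_one (u : InfoStruct K) {g : K → ℕ → ℕ → ℝ} (hg : ∀ k i j, g k i j = -1) :
    val u g = -1 := by
  have : ∀ σ τ, payoff u g σ τ = -1 := fun σ τ => by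
    rw [payoff_eq]; simp only [hg, EE_const]
  unfold val; simp [this]

lemma dVal_aug [Fintype K] (m m' : InfoStruct K) (P : K → PMF ℕ) (enc enc' : ℕ → ℕ → ℕ)
    (p₁ p₂ : ℕ → ℕ) (he₁ : ∀ e c, p₁ (enc e c) = e) (he₂ : ∀ e c, p₂ (enc e c) = c)
    (p₁' p₂' : ℕ → ℕ) (he₁' : ∀ e c, p₁' (enc' e c) = e) (he₂' : ∀ e c, p₂' (enc' e c) = c) :
    dVal (aug m P enc) (aug m' P enc') ≤ dVal m m' := by
  have h0 : 0 ≤ dVal m m' := Real.iSup_nonneg fun _ => abs_nonneg _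
  refine Real.iSup_le ?_ h0
  rintro ⟨g, L, hg⟩
  dsimp only
  rcases Nat.eq_zero_or_pos L with rfl | hL
  · have : ∀ k i j, g k i j = -1 := fun k i j => hg.2.1 k i j (Nat.zero_le _)
    rw [val_neg_one _ this, val_neg_one _ this]; simpa using h0
  refine le_of_forall_pos_le_add fun ε hε => ?_
  choose N₀ hN₀ using fun k => exists_tail (P k) (half_pos hε)
  set N := ∑ k, N₀ k + 1 with hNdef
  have hN : ∀ k, EE (P k) (fun c => if N ≤ c then 1 else 0) ≤ ε / 2 := fun k =>
    hN₀ k N (by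
      have := Finset.single_le_sum (f := N₀) (fun _ _ => Nat.zero_le _) (Finset.mem_univ k)
      omega)
  obtain ⟨L', dec, hLL, hd1, hd2, hd3⟩ := exists_dec L N hL (by omega)
  have hpay : IsPayoff (gaux P g dec) := by
    refine ⟨L', gaux_Icc P dec hg.1, fun k i j hi => ?_, fun k i j hi hj => ?_⟩
    · unfold gaux
      simp only [hd1 i _ hi, hg.2.1 k L j le_rfl, EE_const]
    · unfold gaux
      have : ∀ c, g k (dec i c) j = 1 := fun c => hg.2.2 k _ j (hd2 i c hi) (hLL.trans hj)
      simp only [this, EE_const]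
  have hd := le_dVal m m' hpay
  have a1 := val_gaux_le m P enc dec p₁ p₂ he₁ he₂ hg.1
  have a2 := val_gaux_le m' P enc' dec p₁' p₂' he₁' he₂' hg.1
  have b1 := val_aug_le m P enc hL hg hd3 hN
  have b2 := val_aug_le m' P enc' hL hg hd3 hN
  rw [abs_le] at hd ⊢
  constructor <;> linarith [hd.1, hd.2]

lemma factor (w : PMF (K × (ℕ × ℕ × ℕ) × ℕ))
    (hci : ∀ (k : K) (c c₁ c₂ d : ℕ),
      (∑' y : (ℕ × ℕ × ℕ) × ℕ, w (k, y)) * w (k, (c, c₁, c₂), d)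
        = (∑' (c' : ℕ) (c₂' : ℕ) (d' : ℕ), w (k, (c', c₁, c₂'), d'))
          * (∑' c₁' : ℕ, w (k, (c, c₁', c₂), d))) :
    ∃ P : K → PMF ℕ, w = w.bind (fun x => (P x.1).map
      (fun c₁ => (x.1, (x.2.1.1, c₁, x.2.1.2.2), x.2.2))) := by
  classical
  set W : K → ℝ≥0∞ := fun k => ∑' y : (ℕ × ℕ × ℕ) × ℕ, w (k, y) with hW
  set W1 : K → ℕ → ℝ≥0∞ := fun k c₁ =>
    ∑' (c' : ℕ) (c₂' : ℕ) (d' : ℕ), w (k, (c', c₁, c₂'), d') with hW1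
  have hsum : ∀ k, ∑' c₁, W1 k c₁ = W k := by
    intro k
    simp only [hW, hW1, ENNReal.tsum_prod']
    rw [ENNReal.tsum_comm]
  have htop : ∀ k, W k ≠ ⊤ := by
    intro k
    have h1 : ∑' x : K × (ℕ × ℕ × ℕ) × ℕ, w x = 1 := w.tsum_coe
    rw [ENNReal.tsum_prod'] at h1
    have h2 : W k ≤ 1 := by rw [← h1]; exact ENNReal.le_tsum k
    exact ne_top_of_le_ne_top ENNReal.one_ne_top h2
  have hex : ∀ k, ∃ p : PMF ℕ, W k ≠ 0 → ∀ c, p c = W1 k c * (W k)⁻¹ := by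
    intro k
    by_cases h : W k = 0
    · exact ⟨PMF.pure 0, fun h' => absurd h h'⟩
    · refine ⟨⟨fun c => W1 k c * (W k)⁻¹, ?_⟩, fun _ c => rfl⟩
      have : ∑' c, W1 k c * (W k)⁻¹ = 1 := by
        rw [ENNReal.tsum_mul_right, hsum, ENNReal.mul_inv_cancel h (htop k)]
      rw [← this]; exact ENNReal.summable.hasSum
  choose P hP using hex
  refine ⟨P, PMF.ext ?_⟩
  rintro ⟨k, ⟨c, c₁, c₂⟩, d⟩
  rw [PMF.bind_apply]
  have hmap : ∀ x : K × (ℕ × ℕ × ℕ) × ℕ,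
      ((P x.1).map (fun c₁ => (x.1, (x.2.1.1, c₁, x.2.1.2.2), x.2.2))) (k, (c, c₁, c₂), d)
      = if x.1 = k ∧ x.2.1.1 = c ∧ x.2.1.2.2 = c₂ ∧ x.2.2 = d then P k c₁ else 0 := by
    rintro ⟨k', ⟨a, b, e⟩, f⟩
    rw [PMF.map_apply]
    split_ifs with h
    · obtain ⟨rfl, rfl, rfl, rfl⟩ := h
      rw [tsum_eq_single c₁]
      · simp
      · intro b' hb'
        rw [if_neg]
        simpa using hb'.symm
    · rw [ENNReal.tsum_eq_zero]
      intro b'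
      rw [if_neg]
      intro h'
      simp only [Prod.mk.injEq] at h'
      exact h ⟨h'.1.symm, h'.2.1.1.symm, h'.2.1.2.2.symm, h'.2.2.symm⟩
  simp only [hmap]
  have hR : ∑' x : K × (ℕ × ℕ × ℕ) × ℕ, w x *
      (if x.1 = k ∧ x.2.1.1 = c ∧ x.2.1.2.2 = c₂ ∧ x.2.2 = d then P k c₁ else 0)
      = (∑' b, w (k, (c, b, c₂), d)) * P k c₁ := by
    simp only [ENNReal.tsum_prod']
    rw [tsum_eq_single k, tsum_eq_single c, ← ENNReal.tsum_mul_right]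
    · congr 1; funext b
      rw [tsum_eq_single c₂, tsum_eq_single d]
      · simp
      · intro d' h; simp [h]
      · intro d' h; simp [h]
    · intro d' h; simp [h]
    · intro d' h; simp [h]
  rw [hR]
  by_cases h : W k = 0
  · have hz : ∀ y, w (k, y) = 0 := ENNReal.tsum_eq_zero.1 h
    simp [hz]
  · rw [hP k h]
    have := hci k c c₁ c₂ d
    change W k * _ = W1 k c₁ * _ at this
    calc w (k, (c, c₁, c₂), d) = (W k)⁻¹ * (W k * w (k, (c, c₁, c₂), d)) := by
          rw [← mul_assoc, ENNReal.inv_mul_cancel h (htop k), one_mul]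
      _ = _ := by rw [this]; ring

/-- Informational substitutes: if under `w ∈ Δ(K × (C×C₁×C₂) × D)` the signal
`c₁` is conditionally independent from `(c,c₂,d)` given the state `k`, then
`d(u',v') ≥ d(u,v)`, where `u` keeps all of `(c,c₁,c₂)`, `v = marg` dropping
`c₂`, `u' = marg` dropping `c₁`, `v' = marg` dropping both (product signal
spaces are encoded in `ℕ` via `Nat.pair`). -/
theorem informational_substitutes (K : Type) [Fintype K]
    (hK : 2 ≤ Fintype.card K) (w : PMF (K × (ℕ × ℕ × ℕ) × ℕ))
    (hci : ∀ (k : K) (c c₁ c₂ d : ℕ),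
      (∑' y : (ℕ × ℕ × ℕ) × ℕ, w (k, y)) * w (k, (c, c₁, c₂), d)
        = (∑' (c' : ℕ) (c₂' : ℕ) (d' : ℕ), w (k, (c', c₁, c₂'), d'))
          * (∑' c₁' : ℕ, w (k, (c, c₁', c₂), d))) :
    dVal (w.map (fun x => (x.1, Nat.pair x.2.1.1 (Nat.pair x.2.1.2.1 x.2.1.2.2), x.2.2)))
         (w.map (fun x => (x.1, Nat.pair x.2.1.1 x.2.1.2.1, x.2.2)))
      ≤ dVal (w.map (fun x => (x.1, Nat.pair x.2.1.1 x.2.1.2.2, x.2.2)))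
             (w.map (fun x => (x.1, x.2.1.1, x.2.2))) := by
  obtain ⟨P, hP⟩ := factor w hci
  have e1 : w.map (fun x => (x.1, Nat.pair x.2.1.1 (Nat.pair x.2.1.2.1 x.2.1.2.2), x.2.2))
      = aug (w.map (fun x => (x.1, Nat.pair x.2.1.1 x.2.1.2.2, x.2.2))) P
        (fun e c => Nat.pair (Nat.unpair e).1 (Nat.pair c (Nat.unpair e).2)) := by
    conv_lhs => rw [hP]
    rw [aug, PMF.map_bind, PMF.bind_map]
    congr 1; funext x
    simp [PMF.map_comp, Function.comp_def]
  have e2 : w.map (fun x => (x.1, Nat.pair x.2.1.1 x.2.1.2.1, x.2.2))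
      = aug (w.map (fun x => (x.1, x.2.1.1, x.2.2))) P Nat.pair := by
    conv_lhs => rw [hP]
    rw [aug, PMF.map_bind, PMF.bind_map]
    congr 1; funext x
    simp [PMF.map_comp, Function.comp_def]
  rw [e1, e2]
  exact dVal_aug _ _ P _ _
    (fun s => Nat.pair (Nat.unpair s).1 (Nat.unpair (Nat.unpair s).2).2)
    (fun s => (Nat.unpair (Nat.unpair s).2).1) (by intro e c; simp) (by intro e c; simp)
    (fun s => (Nat.unpair s).1) (fun s => (Nat.unpair s).2)
    (by intro e c; simp) (by intro e c; simp)

end ValueDistance
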